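/- Let h : E → F be a consonance of semilattices with zero. Then for every tight filter ξ on E, the set ȟ(ξ) = {f ∈ F : h(e) ≼ f for some e ∈ ξ} is a tight filter on F, and ȟ(ξ) = ĥ⁻¹(ξ), where ĥ is the dual map on tight filters (ĥ(η) = {e ∈ E : h(e) ∈ η}). Consequently ȟ is an order-homeomorphism from Ê_tight to F̂_tight. -/

import Mathlib

/-- A finite subset `C` is a cover for `f`: every `c ∈ C` satisfies `c ≤ f` and every
nonzero `g ≤ f` meets some `c ∈ C`. -/
def IsCover {E : Type*} [SemilatticeInf E] [OrderBot E] (C : Finset E) (f : E) : Prop :=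
  (∀ c ∈ C, c ≤ f) ∧ ∀ g : E, g ≠ ⊥ → g ≤ f → ∃ c ∈ C, g ⊓ c ≠ ⊥

/-- The (finite) family `{v i : i ∈ C}` is a cover for `f`. -/
def IsCoverFam {ι : Type*} {E : Type*} [SemilatticeInf E] [OrderBot E]
    (C : Finset ι) (v : ι → E) (f : E) : Prop :=
  (∀ i ∈ C, v i ≤ f) ∧ ∀ g : E, g ≠ ⊥ → g ≤ f → ∃ i ∈ C, g ⊓ v i ≠ ⊥

/-- A character on a semilattice with zero: a multiplicative `{0,1}`-valued map sending
`0` to `0` and not identically zero. -/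
def IsChar {E : Type*} [SemilatticeInf E] [OrderBot E] (φ : E → Bool) : Prop :=
  φ ⊥ = false ∧ (∀ e f : E, φ (e ⊓ f) = (φ e && φ f)) ∧ ∃ e : E, φ e = true

/-- A tight character: a character such that, for every `f` and every cover `C` for `f`,
`φ f = max_{c ∈ C} φ c`. -/
def IsTightChar {E : Type*} [SemilatticeInf E] [OrderBot E] (φ : E → Bool) : Prop :=
  IsChar φ ∧ ∀ f : E, ∀ C : Finset E, IsCover C f → (φ f = true ↔ ∃ c ∈ C, φ c = true)

/-- A filter on a semilattice with zero. -/
def IsFilterOn {E : Type*} [SemilatticeInf E] [OrderBot E] (ξ : Set E) : Prop :=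
  ξ.Nonempty ∧ ⊥ ∉ ξ ∧ (∀ e ∈ ξ, ∀ f ∈ ξ, e ⊓ f ∈ ξ) ∧ ∀ e ∈ ξ, ∀ f : E, e ≤ f → f ∈ ξ

/-- A tight filter: whenever `C` is a cover for some `f ∈ ξ`, some element of `C` lies in `ξ`. -/
def IsTightFilter {E : Type*} [SemilatticeInf E] [OrderBot E] (ξ : Set E) : Prop :=
  IsFilterOn ξ ∧ ∀ f ∈ ξ, ∀ C : Finset E, IsCover C f → ∃ c ∈ C, c ∈ ξ

/-- The tight order: `e` is tightly below `f` iff there is no nonzero `g ≤ e` with `g ⊓ f = ⊥`. -/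
def TightBelow {E : Type*} [SemilatticeInf E] [OrderBot E] (e f : E) : Prop :=
  ¬ ∃ g : E, g ≠ ⊥ ∧ g ≤ e ∧ g ⊓ f = ⊥

/-- Tight equivalence. -/
def TightEquiv {E : Type*} [SemilatticeInf E] [OrderBot E] (e f : E) : Prop :=
  TightBelow e f ∧ TightBelow f e

/-- A homomorphism is tightly injective if it reflects tight equivalence. -/
def TightlyInjective {E F : Type*} [SemilatticeInf E] [OrderBot E] [SemilatticeInf F] [OrderBot F]
    (h : E → F) : Prop :=
  ∀ e₁ e₂ : E, TightEquiv (h e₁) (h e₂) → TightEquiv e₁ e₂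

/-- A homomorphism is tightly surjective if its range is a large subset of the codomain:
for every `f` there is a finite `C ⊆ E` with `h e ≼ f` for all `e ∈ C` and
`{f ⊓ h e : e ∈ C}` a cover for `f`. -/
def TightlySurjective {E F : Type*} [SemilatticeInf E] [OrderBot E] [SemilatticeInf F] [OrderBot F]
    (h : E → F) : Prop :=
  ∀ f : F, ∃ C : Finset E, (∀ e ∈ C, TightBelow (h e) f) ∧ IsCoverFam C (fun e => f ⊓ h e) f

/-- A homomorphism of semilattices with zero is tight if it satisfies conditions
(4.1.ii) and (4.3.ii) of the paper. -/
def IsTightHom {E F : Type*} [SemilatticeInf E] [OrderBot E] [SemilatticeInf F] [OrderBot F]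
    (h : E → F) : Prop :=
  (∀ f : F, ∃ C : Finset E, IsCoverFam C (fun e => f ⊓ h e) f) ∧
  (∀ e : E, ∀ C : Finset E, IsCover C e → IsCoverFam C h (h e))

/-- The tight spectrum of a semilattice with zero, in the filter model: the set of all
tight filters, ordered by inclusion (the spectral order) and topologized via
characteristic functions as a subspace of the product `E → Bool` (`Bool` discrete). -/
structure TightFilters (E : Type*) [SemilatticeInf E] [OrderBot E] where
  carrier : Set E
  tight : IsTightFilter carrier

/-- The spectral order on tight filters: inclusion. -/
instance {E : Type*} [SemilatticeInf E] [OrderBot E] : PartialOrder (TightFilters E) :=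
  PartialOrder.lift TightFilters.carrier (fun a b h => by cases a; cases b; congr)

open Classical in
/-- The topology on tight filters, induced by characteristic functions from the product
topology on `E → Bool` (`Bool` discrete). -/
noncomputable instance {E : Type*} [SemilatticeInf E] [OrderBot E] :
    TopologicalSpace (TightFilters E) :=
  TopologicalSpace.induced
    (fun ξ : TightFilters E => (fun e => decide (e ∈ ξ.carrier) : E → Bool)) inferInstance

section Helpers

variable {E F : Type*} [SemilatticeInf E] [OrderBot E] [SemilatticeInf F] [OrderBot F]

theorem ne_bot_mono {a b : E} (ha : a ≠ ⊥) (hab : a ≤ b) : b ≠ ⊥ := by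
  rintro rfl
  exact ha (le_bot_iff.1 hab)

theorem TightBelow.ne {e f g : E} (H : TightBelow e f) (hg : g ≠ ⊥) (hge : g ≤ e) :
    g ⊓ f ≠ ⊥ := fun h => H ⟨g, hg, hge, h⟩

theorem TightBelow.of_forall {e f : E} (H : ∀ g, g ≠ ⊥ → g ≤ e → g ⊓ f ≠ ⊥) :
    TightBelow e f := by
  rintro ⟨g, h1, h2, h3⟩
  exact H g h1 h2 h3

theorem TightBelow.of_le {e f : E} (hef : e ≤ f) : TightBelow e f :=
  .of_forall fun g hg hge => by rwa [inf_eq_left.2 (hge.trans hef)]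

theorem TightBelow.tr {e f k : E} (H : TightBelow e f) (H' : TightBelow f k) :
    TightBelow e k :=
  .of_forall fun g hg hge => ne_bot_mono (H'.ne (H.ne hg hge) inf_le_right)
    (inf_le_inf_right _ inf_le_left)

theorem TightBelow.inf {e f e' f' : E} (H : TightBelow e f) (H' : TightBelow e' f') :
    TightBelow (e ⊓ e') (f ⊓ f') :=
  .of_forall fun g hg hge => by
    have h1 := H.ne hg (hge.trans inf_le_left)
    have h2 := H'.ne h1 (inf_le_left.trans (hge.trans inf_le_right))
    rwa [inf_assoc] at h2

theorem TightBelow.bot {e : E} (H : TightBelow e ⊥) : e = ⊥ := by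
  by_contra he
  exact H.ne he le_rfl (inf_bot_eq _)

theorem IsTightFilter.up {ξ : Set E} (H : IsTightFilter ξ) {e f : E} (he : e ∈ ξ)
    (hef : TightBelow e f) : f ∈ ξ := by
  obtain ⟨c, hc, hcξ⟩ := H.2 e he {e ⊓ f} ⟨by simp, fun g hg hge => ⟨e ⊓ f, by simp, by
    rw [← inf_assoc, inf_eq_left.2 hge]; exact hef.ne hg hge⟩⟩
  rw [Finset.mem_singleton] at hc
  subst hc
  exact H.1.2.2.2 _ hcξ _ inf_le_right

theorem IsTightFilter.fam {ι : Type*} {ξ : Set E} (H : IsTightFilter ξ) {f : E} (hf : f ∈ ξ)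
    {C : Finset ι} {v : ι → E} (hC : IsCoverFam C v f) : ∃ i ∈ C, v i ∈ ξ := by
  classical
  obtain ⟨c, hc, hcξ⟩ := H.2 f hf (C.image v) ⟨by simpa using hC.1, fun g hg hgf => by
    simpa using hC.2 g hg hgf⟩
  obtain ⟨i, hi, rfl⟩ := Finset.mem_image.1 hc
  exact ⟨i, hi, hcξ⟩

theorem refl_bot {h : E → F} (h0 : h ⊥ = ⊥) (hi : TightlyInjective h) {e : E} (he : e ≠ ⊥) :
    h e ≠ ⊥ := by
  intro H
  have := hi e ⊥ (by rw [H, h0]; exact ⟨.of_le le_rfl, .of_le le_rfl⟩)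
  exact he this.1.bot

theorem refl_below {h : E → F} (hinf : ∀ a b : E, h (a ⊓ b) = h a ⊓ h b)
    (hi : TightlyInjective h) {a b : E} (H : TightBelow (h a) (h b)) : TightBelow a b := by
  have h1 : TightBelow (h a) (h (a ⊓ b)) := by
    rw [hinf]
    have := (TightBelow.of_le (le_refl (h a))).inf H
    rwa [inf_idem] at this
  have h2 : TightBelow (h (a ⊓ b)) (h a) := by
    rw [hinf]; exact .of_le inf_le_left
  exact (hi _ _ ⟨h1, h2⟩).1.tr (.of_le inf_le_right)

theorem cover_map {h : E → F} (h0 : h ⊥ = ⊥) (hinf : ∀ a b : E, h (a ⊓ b) = h a ⊓ h b)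
    (hi : TightlyInjective h) (hs : TightlySurjective h) {e : E} {C : Finset E}
    (hC : IsCover C e) : IsCoverFam C h (h e) := by
  refine ⟨fun c hc => ?_, fun g hg hge => ?_⟩
  · have := hinf c e
    rw [inf_eq_left.2 (hC.1 c hc)] at this
    exact inf_eq_left.1 this.symm
  · obtain ⟨D, hD, hDc⟩ := hs g
    obtain ⟨d, hd, hne⟩ := hDc.2 g hg le_rfl
    have hdne : d ≠ ⊥ := by
      rintro rfl
      simp [h0] at hne
    have hde : TightBelow d e := refl_below hinf hi ((hD d hd).tr (.of_le hge))
    obtain ⟨c, hc, hcne⟩ := hC.2 _ (hde.ne hdne le_rfl) inf_le_right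
    refine ⟨c, hc, ?_⟩
    have h1 := refl_bot h0 hi hcne
    have h2 : h (d ⊓ e ⊓ c) ≤ h d := by
      rw [hinf, hinf]; exact inf_le_left.trans inf_le_left
    have h3 : h (d ⊓ e ⊓ c) ≤ h c := by
      rw [hinf]; exact inf_le_right
    exact ne_bot_mono ((hD d hd).ne h1 h2) (le_inf inf_le_right (inf_le_left.trans h3))

theorem check_tight {h : E → F} (h0 : h ⊥ = ⊥) (hinf : ∀ a b : E, h (a ⊓ b) = h a ⊓ h b)
    (hi : TightlyInjective h) (hs : TightlySurjective h) {ξ : Set E} (H : IsTightFilter ξ) :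
    IsTightFilter {f : F | ∃ e ∈ ξ, TightBelow (h e) f} := by
  classical
  refine ⟨⟨?_, ?_, ?_, ?_⟩, ?_⟩
  · obtain ⟨e, he⟩ := H.1.1
    exact ⟨h e, e, he, .of_le le_rfl⟩
  · rintro ⟨e, he, heb⟩
    refine refl_bot h0 hi ?_ heb.bot
    rintro rfl
    exact H.1.2.1 he
  · rintro f ⟨e, he, hef⟩ f' ⟨e', he', hef'⟩
    exact ⟨e ⊓ e', H.1.2.2.1 e he e' he', by rw [hinf]; exact hef.inf hef'⟩
  · rintro f ⟨e, he, hef⟩ f' hff'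
    exact ⟨e, he, hef.tr (.of_le hff')⟩
  · rintro f ⟨e, he, hef⟩ C hC
    choose D hD hDc using hs
    have hcov : IsCoverFam (C.biUnion D) (fun d => e ⊓ d) e := by
      refine ⟨fun _ _ => inf_le_left, fun g hg hge => ?_⟩
      have hge' : h g ≤ h e := by
        have := hinf g e
        rw [inf_eq_left.2 hge] at this
        exact inf_eq_left.1 this.symm
      obtain ⟨c, hc, hcne⟩ := hC.2 _ (hef.ne (refl_bot h0 hi hg) hge') inf_le_right
      obtain ⟨d, hd, hdne⟩ := (hDc c).2 _ hcne inf_le_right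
      refine ⟨d, Finset.mem_biUnion.2 ⟨c, hc, hd⟩, ?_⟩
      rw [← inf_assoc, inf_eq_left.2 hge]
      intro hb
      refine hdne (le_bot_iff.1 ?_)
      rw [← h0, ← hb, hinf]
      exact inf_le_inf (inf_le_left.trans inf_le_left) inf_le_right
    obtain ⟨d, hd, hdξ⟩ := H.fam he hcov
    obtain ⟨c, hc, hdc⟩ := Finset.mem_biUnion.1 hd
    exact ⟨c, hc, d, H.1.2.2.2 _ hdξ _ inf_le_right, hD c d hdc⟩

theorem mem_check {h : E → F} (hinf : ∀ a b : E, h (a ⊓ b) = h a ⊓ h b)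
    (hi : TightlyInjective h) {ξ : Set E} (H : IsTightFilter ξ) (e : E) :
    (∃ e' ∈ ξ, TightBelow (h e') (h e)) ↔ e ∈ ξ :=
  ⟨fun ⟨_, he', hb⟩ => H.up he' (refl_below hinf hi hb), fun he => ⟨e, he, .of_le le_rfl⟩⟩

theorem check_hat {h : E → F} (hs : TightlySurjective h) {η : Set F} (H : IsTightFilter η) :
    {f : F | ∃ e ∈ {e : E | h e ∈ η}, TightBelow (h e) f} = η := by
  ext f
  constructor
  · rintro ⟨e, he, hef⟩
    exact H.up he hef
  · intro hf
    obtain ⟨D, hD, hDc⟩ := hs f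
    obtain ⟨d, hd, hdη⟩ := H.fam hf hDc
    exact ⟨d, H.1.2.2.2 _ hdη _ inf_le_right, hD d hd⟩

theorem hat_tight {h : E → F} (h0 : h ⊥ = ⊥) (hinf : ∀ a b : E, h (a ⊓ b) = h a ⊓ h b)
    (hi : TightlyInjective h) (hs : TightlySurjective h) {η : Set F} (H : IsTightFilter η) :
    IsTightFilter {e : E | h e ∈ η} := by
  refine ⟨⟨?_, ?_, ?_, ?_⟩, ?_⟩
  · obtain ⟨f, hf⟩ := H.1.1
    rw [← check_hat hs H] at hf
    obtain ⟨e, he, -⟩ := hf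
    exact ⟨e, he⟩
  · intro hb
    rw [Set.mem_ofPred_eq, h0] at hb
    exact H.1.2.1 hb
  · intro e he f hf
    rw [Set.mem_ofPred_eq, hinf]
    exact H.1.2.2.1 _ he _ hf
  · intro e he f hef
    refine H.1.2.2.2 _ he _ ?_
    have := hinf e f
    rw [inf_eq_left.2 hef] at this
    exact inf_eq_left.1 this.symm
  · intro e he C hC
    exact H.fam he (cover_map h0 hinf hi hs hC)

theorem TightFilters.isClopen (e : E) : IsClopen {ξ : TightFilters E | e ∈ ξ.carrier} := by
  classical
  have h1 : Continuous (fun ξ : TightFilters E => (fun e => decide (e ∈ ξ.carrier) : E → Bool)) := by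
    convert continuous_induced_dom
  have h2 := (continuous_apply e).comp h1
  have h3 := (continuous_bool_rng true).1 h2
  convert h3 using 1
  ext ξ
  simp

theorem TightFilters.continuous_of {X : Type*} [TopologicalSpace X] {m : X → TightFilters E}
    (H : ∀ e, IsClopen {x | e ∈ (m x).carrier}) : Continuous m := by
  refine continuous_induced_rng.2 (continuous_pi fun e => ?_)
  refine (continuous_bool_rng true).2 ?_
  convert H e using 1
  ext x
  simp

end Helpers

/-- Let `h : E → F` be a consonance of semilattices with zero. Then for
every tight filter `ξ` on `E`, the set `ȟ ξ = {f : F | ∃ e ∈ ξ, h e ≼ f}` is a tight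
filter on `F`; moreover `ȟ ξ = ĥ⁻¹ ξ`, i.e. for every tight filter `η` on `F`,
`ĥ η = ξ` iff `η = ȟ ξ` (where `ĥ η = {e : E | h e ∈ η}` is the dual map).
Consequently `ȟ` is an order-homeomorphism from `Ê_tight` to `F̂_tight`. -/
theorem check_map_of_consonance {E F : Type*} [SemilatticeInf E] [OrderBot E]
    [SemilatticeInf F] [OrderBot F]
    (h : E → F) (h0 : h ⊥ = ⊥) (hinf : ∀ a b : E, h (a ⊓ b) = h a ⊓ h b)
    (hi : TightlyInjective h) (hs : TightlySurjective h) :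
    (∀ ξ : Set E, IsTightFilter ξ →
      IsTightFilter {f : F | ∃ e ∈ ξ, TightBelow (h e) f}) ∧
    (∀ ξ : Set E, IsTightFilter ξ → ∀ η : Set F, IsTightFilter η →
      ({e : E | h e ∈ η} = ξ ↔ η = {f : F | ∃ e ∈ ξ, TightBelow (h e) f})) ∧
    (∃ hmap : ∀ ξ : TightFilters E,
        IsTightFilter {f : F | ∃ e ∈ ξ.carrier, TightBelow (h e) f},
      IsHomeomorph (fun ξ : TightFilters E =>
        (⟨{f : F | ∃ e ∈ ξ.carrier, TightBelow (h e) f}, hmap ξ⟩ : TightFilters F)) ∧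
      ∀ ξ₁ ξ₂ : TightFilters E, ξ₁ ≤ ξ₂ ↔
        (⟨{f : F | ∃ e ∈ ξ₁.carrier, TightBelow (h e) f}, hmap ξ₁⟩ : TightFilters F) ≤
          ⟨{f : F | ∃ e ∈ ξ₂.carrier, TightBelow (h e) f}, hmap ξ₂⟩) := by
  have hmap : ∀ ξ : TightFilters E,
      IsTightFilter {f : F | ∃ e ∈ ξ.carrier, TightBelow (h e) f} :=
    fun ξ => check_tight h0 hinf hi hs ξ.tight
  refine ⟨fun ξ H => check_tight h0 hinf hi hs H, fun ξ H η H' => ⟨?_, ?_⟩, hmap, ?_, ?_⟩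
  · rintro rfl
    exact (check_hat hs H').symm
  · rintro rfl
    ext e
    exact mem_check hinf hi H e
  · rw [isHomeomorph_iff_exists_inverse]
    refine ⟨?_, fun η => ⟨{e : E | h e ∈ η.carrier}, hat_tight h0 hinf hi hs η.tight⟩, ?_, ?_, ?_⟩
    · refine TightFilters.continuous_of fun f => ?_
      obtain ⟨D, hD, hDc⟩ := hs f
      have : {ξ : TightFilters E | ∃ e ∈ ξ.carrier, TightBelow (h e) f} =
          ⋃ d ∈ D, {ξ : TightFilters E | d ∈ ξ.carrier} := by
        ext ξ
        simp only [Set.mem_ofPred_eq, Set.mem_iUnion, exists_prop]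
        constructor
        · intro hf
          obtain ⟨d, hd, hdη⟩ := (hmap ξ).fam hf hDc
          exact ⟨d, hd, (mem_check hinf hi ξ.tight d).1
            ((hmap ξ).1.2.2.2 _ hdη _ inf_le_right)⟩
        · rintro ⟨d, hd, hdξ⟩
          exact ⟨d, hdξ, hD d hd⟩
      change IsClopen {ξ : TightFilters E | ∃ e ∈ ξ.carrier, TightBelow (h e) f}
      rw [this]
      exact D.finite_toSet.isClopen_biUnion fun d _ => TightFilters.isClopen d
    · rintro ⟨ξ, H⟩
      refine (TightFilters.mk.injEq _ _ _ _).mpr ?_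
      ext e
      exact mem_check hinf hi H e
    · rintro ⟨η, H⟩
      refine (TightFilters.mk.injEq _ _ _ _).mpr ?_
      exact check_hat hs H
    · exact TightFilters.continuous_of fun e => TightFilters.isClopen (h e)
  · intro ξ₁ ξ₂
    constructor
    · rintro H f ⟨e, he, hef⟩
      exact ⟨e, H he, hef⟩
    · intro H e he
      exact (mem_check hinf hi ξ₂.tight e).1 (H ⟨e, he, .of_le le_rfl⟩)
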